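/- Let 𝔊 be a homothecy invariant collection of open rectangles (not necessarily axis-parallel) in ℝⁿ and let μ be a nonzero locally finite nonnegative Borel measure on ℝⁿ which is doubling with respect to 𝔊. Then the following are equivalent: (i) there exist γ ∈ (0,1) and c > 0 such that μ({x ∈ ℝⁿ : M_{𝔊,μ}(1_E)(x) > γ}) ≤ c·μ(E) for every Borel set E ⊆ ℝⁿ; (ii) there exists p₀ > 1 such that M_{𝔊,μ} is bounded on L^p(μ) for every p > p₀. -/

import Mathlib

open MeasureTheory Set Filter
open scoped ENNReal Topology Pointwise

noncomputable section

/-- The maximal operator `M_{𝔅,μ}` associated to a measure `μ` and a collection `𝔅`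
of subsets of `ℝⁿ`, applied to `f` at the point `x` (valued in `ℝ≥0∞`; it equals `0`
outside the union of `𝔅`). -/
noncomputable def maxOp {n : ℕ} (μ : Measure (EuclideanSpace ℝ (Fin n)))
    (𝔅 : Set (Set (EuclideanSpace ℝ (Fin n))))
    (f : EuclideanSpace ℝ (Fin n) → ℝ) (x : EuclideanSpace ℝ (Fin n)) : ℝ≥0∞ :=
  ⨆ (B : Set (EuclideanSpace ℝ (Fin n))) (_ : B ∈ 𝔅) (_ : x ∈ B) (_ : 0 < μ B),
    (∫⁻ y in B, ENNReal.ofReal |f y| ∂μ) / μ B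

/-- A collection of sets is homothecy invariant if it is closed under translations and
positive dilations. -/
def HomothecyInvariant {n : ℕ} (𝔅 : Set (Set (EuclideanSpace ℝ (Fin n)))) : Prop :=
  ∀ B ∈ 𝔅, (∀ y : EuclideanSpace ℝ (Fin n), y +ᵥ B ∈ 𝔅) ∧ (∀ s : ℝ, 0 < s → s • B ∈ 𝔅)

/-- `μ` is doubling with respect to the collection `𝔅`, with constant `Δ`: whenever
`B ∈ 𝔅` and a translate of the dilate `2·B` contains `B`, its measure is at most
`Δ·μ(B)`. -/
def DoublingWrt {n : ℕ} (μ : Measure (EuclideanSpace ℝ (Fin n)))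
    (𝔅 : Set (Set (EuclideanSpace ℝ (Fin n)))) (Δ : ℝ) : Prop :=
  ∀ B ∈ 𝔅, ∀ σ : EuclideanSpace ℝ (Fin n),
    B ⊆ σ +ᵥ (2 : ℝ) • B → μ (σ +ᵥ (2 : ℝ) • B) ≤ ENNReal.ofReal Δ * μ B

/-- A member of a basis of convex sets: nonempty, bounded, open and convex. -/
def IsConvexBasisSet {n : ℕ} (B : Set (EuclideanSpace ℝ (Fin n))) : Prop :=
  B.Nonempty ∧ Bornology.IsBounded B ∧ IsOpen B ∧ Convex ℝ B

/-- An open axis-parallel rectangle in `ℝⁿ`. -/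
def IsAxisRect {n : ℕ} (R : Set (EuclideanSpace ℝ (Fin n))) : Prop :=
  ∃ a b : Fin n → ℝ, (∀ i, a i < b i) ∧ R = {x | ∀ i, x i ∈ Set.Ioo (a i) (b i)}

/-- An open rectangle (possibly rotated rectangular parallelepiped) in `ℝⁿ`:
the image of an open axis-parallel rectangle under a rigid motion. -/
def IsRect {n : ℕ} (R : Set (EuclideanSpace ℝ (Fin n))) : Prop :=
  ∃ (f : EuclideanSpace ℝ (Fin n) ≃ᵢ EuclideanSpace ℝ (Fin n))
    (S : Set (EuclideanSpace ℝ (Fin n))), IsAxisRect S ∧ R = f '' S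

/-- An open axis-parallel cube in `ℝⁿ`. -/
def IsAxisCube {n : ℕ} (C : Set (EuclideanSpace ℝ (Fin n))) : Prop :=
  ∃ (a : Fin n → ℝ) (s : ℝ), 0 < s ∧ C = {x | ∀ i, x i ∈ Set.Ioo (a i) (a i + s)}

/-- `M_{𝔅,μ}` is bounded on `L^p(ν)`. -/
def BoundedOnLp {n : ℕ} (μ ν : Measure (EuclideanSpace ℝ (Fin n)))
    (𝔅 : Set (Set (EuclideanSpace ℝ (Fin n)))) (p : ℝ) : Prop :=
  ∃ C : ℝ≥0∞, C ≠ ⊤ ∧ ∀ f : EuclideanSpace ℝ (Fin n) → ℝ, Measurable f →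
    ∫⁻ x, maxOp μ 𝔅 f x ^ p ∂ν ≤ C * ∫⁻ x, ENNReal.ofReal |f x| ^ p ∂ν

/-- The Tauberian condition for `M_{𝔅,μ}` at level `γ`, with constant `c`, with respect
to the measure `ν`. -/
def TauberianCond {n : ℕ} (μ ν : Measure (EuclideanSpace ℝ (Fin n)))
    (𝔅 : Set (Set (EuclideanSpace ℝ (Fin n)))) (γ c : ℝ) : Prop :=
  ∀ E : Set (EuclideanSpace ℝ (Fin n)), MeasurableSet E →
    ν {x | ENNReal.ofReal γ < maxOp μ 𝔅 (E.indicator 1) x} ≤ ENNReal.ofReal c * ν E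

/-- The standard open dyadic box of scale `2^k` and position `m` in `ℝⁿ`. -/
def stdBox (n : ℕ) (k : ℤ) (m : Fin n → ℤ) : Set (Fin n → ℝ) :=
  {x | ∀ i, (m i : ℝ) * 2 ^ k < x i ∧ x i < ((m i : ℝ) + 1) * 2 ^ k}

/-- A parametrization of a rectangular grid: a rigid motion composed with a positive
diagonal scaling. The image of the standard unit box under such a map is a rectangle. -/
def IsRectParam {n : ℕ} (T : (Fin n → ℝ) → EuclideanSpace ℝ (Fin n)) : Prop :=
  ∃ (f : EuclideanSpace ℝ (Fin n) ≃ᵢ EuclideanSpace ℝ (Fin n)) (l : Fin n → ℝ),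
    (∀ i, 0 < l i) ∧
    ∀ x, T x = f ((WithLp.equiv 2 (Fin n → ℝ)).symm (fun i => l i * x i))

/-- The dyadic mesh generated by a rectangle parametrized by `T`. -/
def dyadicMesh {n : ℕ} (T : (Fin n → ℝ) → EuclideanSpace ℝ (Fin n)) :
    Set (Set (EuclideanSpace ℝ (Fin n))) :=
  {S | ∃ (k : ℤ) (m : Fin n → ℤ), S = T '' stdBox n k m}

/-- `S` is a dyadic descendant of the rectangle `R`, `s` generations inside `R`. -/
def DyadicDescendant {n : ℕ} (R S : Set (EuclideanSpace ℝ (Fin n))) (s : ℕ) : Prop :=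
  ∃ T : (Fin n → ℝ) → EuclideanSpace ℝ (Fin n), IsRectParam T ∧
    T '' stdBox n 0 0 = R ∧
    ∃ m : Fin n → ℤ, (∀ i, 0 ≤ m i ∧ m i < 2 ^ s) ∧ S = T '' stdBox n (-(s : ℤ)) m

/-- The family of all homothetic copies (translates and positive dilates) of `R₀`. -/
def homCopies {n : ℕ} (R₀ : Set (EuclideanSpace ℝ (Fin n))) :
    Set (Set (EuclideanSpace ℝ (Fin n))) :=
  {S | ∃ (y : EuclideanSpace ℝ (Fin n)) (s : ℝ), 0 < s ∧ S = y +ᵥ s • R₀}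

/-- Iterated halo sets `H_β^k(E)`: `H_β^0(E) = E` and
`H_β^{k+1}(E) = {x : M_{𝔊,μ}(1_{H_β^k(E)})(x) ≥ β}`. -/
def Hiter {n : ℕ} (μ : Measure (EuclideanSpace ℝ (Fin n)))
    (𝔊 : Set (Set (EuclideanSpace ℝ (Fin n)))) (β : ℝ)
    (E : Set (EuclideanSpace ℝ (Fin n))) : ℕ → Set (EuclideanSpace ℝ (Fin n))
  | 0 => E
  | k + 1 => {x | ENNReal.ofReal β ≤ maxOp μ 𝔊 ((Hiter μ 𝔊 β E k).indicator 1) x}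

/-- The Muckenhoupt `A_{p,𝔅}` condition for a weight `w` (with respect to Lebesgue
measure); here `1 - p/(p-1) = 1 - p'`. -/
def MuckenhouptAp {n : ℕ} (𝔅 : Set (Set (EuclideanSpace ℝ (Fin n))))
    (w : EuclideanSpace ℝ (Fin n) → ℝ) (p : ℝ) : Prop :=
  ∃ C : ℝ≥0∞, C ≠ ⊤ ∧ ∀ B ∈ 𝔅,
    ((∫⁻ x in B, ENNReal.ofReal (w x) ∂volume) / volume B) *
      (((∫⁻ x in B, ENNReal.ofReal (w x) ^ (1 - p / (p - 1)) ∂volume) / volume B) ^ (p - 1))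
      ≤ C

/-- `𝔅` is a Muckenhoupt basis: for every `1 < p < ∞` and every weight `w ∈ A_{p,𝔅}`,
the maximal operator `M_𝔅` is bounded on `L^p(w)`. -/
def MuckenhouptBasis {n : ℕ} (𝔅 : Set (Set (EuclideanSpace ℝ (Fin n)))) : Prop :=
  ∀ p : ℝ, 1 < p → ∀ w : EuclideanSpace ℝ (Fin n) → ℝ, (∀ x, 0 ≤ w x) →
    LocallyIntegrable w volume → MuckenhouptAp 𝔅 w p →
    BoundedOnLp volume (volume.withDensity fun x => ENNReal.ofReal (w x)) 𝔅 p

end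

/-!
The homothets of a symmetric convex body `R ∈ 𝔊` are the balls of a norm, and `μ` is doubling for
these balls with the constant `Δ`, whatever `R` is. Let `A` have density at most `g < 1` in `R`.
By Lebesgue density and continuity of the measure of balls, almost every point of `A ∩ R` lies in a
homothet of `R` inside `R` in which `A` has density exactly `g`. All these homothets belong to the
halo of `A` at any level `γ < g`, and by the Vitali covering lemma disjoint ones among them contain
enough of the complement of `A` that passing to the halo multiplies `μ (A ∩ R)` by at least
`1 + (1 - g) / Δ ^ 3`. So the points where the maximal function of `E` exceeds `4⁻¹ ^ j` are
reached from `E` after `O(j)` halos, and each halo multiplies the measure by at most the Tauberian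
constant `c`.

This gives a restricted weak-type bound growing like `(c ^ K) ^ j`, and decomposing `f` into its
dyadic superlevel sets turns it into an `L^p` bound as soon as `c ^ K < 2 ^ p`. The converse is
Chebyshev's inequality.
-/

open scoped NNReal

section BallDoubling

open Metric

/-- A measure is *ball doubling* with constant `D` if doubling the radius of a ball multiplies its
measure by at most `D`. Unlike `IsUnifLocDoublingMeasure`, this concerns all radii and exposes the
constant, so that estimates can be made uniform over a family of norms. -/
def IsBallDoubling {X : Type*} [PseudoMetricSpace X] [MeasurableSpace X] (ν : Measure X)
    (D : ℝ≥0) : Prop :=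
  ∀ (x : X) (r : ℝ), 0 < r → ν (ball x (2 * r)) ≤ D * ν (ball x r)

namespace IsBallDoubling

section PseudoMetricSpace

variable {X : Type*} [PseudoMetricSpace X] [MeasurableSpace X] {ν : Measure X} {D : ℝ≥0}

theorem measure_ball_two_pow_mul_le (hν : IsBallDoubling ν D) (k : ℕ) (x : X) {r : ℝ}
    (hr : 0 < r) : ν (ball x (2 ^ k * r)) ≤ (D : ℝ≥0∞) ^ k * ν (ball x r) := by
  induction k with
  | zero => simp
  | succ k ih =>
    calc ν (ball x (2 ^ (k + 1) * r)) = ν (ball x (2 * (2 ^ k * r))) := by rw [pow_succ', mul_assoc]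
      _ ≤ D * ν (ball x (2 ^ k * r)) := hν x _ (by positivity)
      _ ≤ D * ((D : ℝ≥0∞) ^ k * ν (ball x r)) := by gcongr
      _ = (D : ℝ≥0∞) ^ (k + 1) * ν (ball x r) := by rw [pow_succ', mul_assoc]

theorem measure_closedBall_le (hν : IsBallDoubling ν D) (k : ℕ) {x y : X} {ε r : ℝ} (hr : 0 < r)
    (h : ε + dist x y < 2 ^ k * r) :
    ν (closedBall x ε) ≤ (D : ℝ≥0∞) ^ k * ν (ball y r) :=
  (measure_mono fun z hz => mem_ball.2 <| (dist_triangle z x y).trans_lt <| by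
    linarith [mem_closedBall.1 hz]).trans (hν.measure_ball_two_pow_mul_le k y hr)

theorem inv_pow_mul_measure_closedBall_le (hν : IsBallDoubling ν D) (k : ℕ) {x y : X} {ε r : ℝ}
    (hr : 0 < r) (h : ε + dist x y < 2 ^ k * r) :
    ((D : ℝ≥0∞) ^ k)⁻¹ * ν (closedBall x ε) ≤ ν (ball y r) := by
  calc ((D : ℝ≥0∞) ^ k)⁻¹ * ν (closedBall x ε)
      ≤ ((D : ℝ≥0∞) ^ k)⁻¹ * (D : ℝ≥0∞) ^ k * ν (ball y r) := by
        rw [mul_assoc]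
        gcongr
        exact hν.measure_closedBall_le k hr h
    _ ≤ ν (ball y r) := mul_le_of_le_one_left' (ENNReal.inv_mul_le_one _)

theorem measure_ball_pos (hν : IsBallDoubling ν D) (h0 : ν ≠ 0) (x : X) {r : ℝ} (hr : 0 < r) :
    0 < ν (ball x r) := by
  refine pos_iff_ne_zero.2 fun hball => h0 ?_
  have hcover : ⋃ k : ℕ, ball x (2 ^ k * r) = univ := by
    refine eq_univ_of_forall fun y => mem_iUnion.2 ?_
    obtain ⟨k, hk⟩ := pow_unbounded_of_one_lt (dist y x / r) one_lt_two
    exact ⟨k, mem_ball.2 ((div_lt_iff₀ hr).1 hk)⟩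
  rw [← Measure.measure_univ_eq_zero, ← hcover, measure_iUnion_null_iff]
  intro k
  simpa [hball] using hν.measure_ball_two_pow_mul_le k x hr

theorem isUnifLocDoublingMeasure (hν : IsBallDoubling ν D) : IsUnifLocDoublingMeasure ν := by
  refine ⟨D ^ 2, eventually_mem_nhdsWithin.mono fun ε (hε : 0 < ε) x => ?_⟩
  calc ν (closedBall x (2 * ε)) ≤ (D : ℝ≥0∞) ^ 2 * ν (ball x ε) :=
        hν.measure_closedBall_le 2 hε (by rw [dist_self]; linarith)
    _ ≤ ↑(D ^ 2) * ν (closedBall x ε) := by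
        rw [ENNReal.coe_pow]
        gcongr
        exact ball_subset_closedBall

variable [ProperSpace X] [BorelSpace X] [IsLocallyFiniteMeasure ν]

theorem measure_eq_zero_of_porous (hν : IsBallDoubling ν D) {S : Set X} (hS : MeasurableSet S)
    (h : ∀ x ∈ S, ∀ᶠ ε in 𝓝[>] (0 : ℝ), ∃ y, ball y (ε / 2) ⊆ closedBall x ε \ S) :
    ν S = 0 := by
  have := hν.isUnifLocDoublingMeasure
  have hdensity := IsUnifLocDoublingMeasure.ae_tendsto_measure_inter_div ν S 1
  rw [ae_restrict_iff' hS] at hdensity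
  refine measure_eq_zero_iff_ae_notMem.2 (hdensity.mono fun x hx hxS => ?_)
  have hlim : Tendsto (fun ε => ν (S ∩ closedBall x ε) / ν (closedBall x ε)) (𝓝[>] 0) (𝓝 1) :=
    hx hxS (fun _ => x) id tendsto_id <| eventually_mem_nhdsWithin.mono fun ε (hε : 0 < ε) =>
      mem_closedBall_self (by simpa using hε.le)
  refine absurd (le_of_tendsto hlim ?_ : 1 ≤ 1 - ((D : ℝ≥0∞) ^ 3)⁻¹)
    (ENNReal.sub_lt_self ENNReal.one_ne_top one_ne_zero (by simp)).not_ge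
  filter_upwards [h x hxS, eventually_mem_nhdsWithin] with ε ⟨y, hy⟩ (hε : 0 < ε)
  have hyx : dist x y ≤ ε := by
    simpa [dist_comm] using (hy (mem_ball_self (half_pos hε))).1
  have hhole : ((D : ℝ≥0∞) ^ 3)⁻¹ * ν (closedBall x ε) ≤ ν (closedBall x ε \ S) :=
    (hν.inv_pow_mul_measure_closedBall_le 3 (half_pos hε) (by linarith)).trans (measure_mono hy)
  have hfin : ν (closedBall x ε) ≠ ∞ := measure_closedBall_lt_top.ne
  refine ENNReal.div_le_of_le_mul ?_
  rw [ENNReal.sub_mul fun _ _ => hfin, one_mul]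
  refine ENNReal.le_sub_of_add_le_right (ne_top_of_le_ne_top hfin (hhole.trans
    (measure_mono sdiff_subset))) ?_
  calc ν (S ∩ closedBall x ε) + ((D : ℝ≥0∞) ^ 3)⁻¹ * ν (closedBall x ε)
      ≤ ν (closedBall x ε ∩ S) + ν (closedBall x ε \ S) := by
        rw [inter_comm]
        gcongr
    _ = ν (closedBall x ε) := measure_inter_add_sdiff _ hS

end PseudoMetricSpace

section NormedSpace

variable {F : Type*} [NormedAddCommGroup F] [NormedSpace ℝ F] [ProperSpace F]
  [MeasurableSpace F] [BorelSpace F] {ν : Measure F} [IsLocallyFiniteMeasure ν] {D : ℝ≥0}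

theorem measure_sphere_eq_zero (hν : IsBallDoubling ν D) (c : F) {r : ℝ} (hr : 0 < r) :
    ν (sphere c r) = 0 := by
  refine hν.measure_eq_zero_of_porous isClosed_sphere.measurableSet fun x (hxc : dist x c = r) => ?_
  filter_upwards [Ioo_mem_nhdsGT hr] with ε ⟨hε, hεr⟩
  -- The hole lies towards the center: at distance `ε / 2` from `x`, inside the sphere.
  set t := ε / (2 * r) with ht
  have htr : t * r = ε / 2 := by rw [ht]; field_simp
  have ht1 : t ≤ 1 := by rw [ht, div_le_one (by positivity)]; linarith
  refine ⟨AffineMap.lineMap x c t, fun z hz => ?_⟩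
  rw [mem_ball] at hz
  have hyx : dist (AffineMap.lineMap x c t) x = ε / 2 := by
    rw [dist_lineMap_left, hxc, Real.norm_of_nonneg (by positivity), htr]
  have hyc : dist (AffineMap.lineMap x c t) c = r - ε / 2 := by
    rw [dist_lineMap_right, hxc, Real.norm_of_nonneg (by linarith), sub_mul, htr, one_mul]
  refine ⟨?_, fun hzc => ?_⟩
  · rw [mem_closedBall]
    linarith [dist_triangle z (AffineMap.lineMap x c t) x]
  · rw [mem_sphere] at hzc
    linarith [dist_triangle z (AffineMap.lineMap x c t) c]

theorem ball_ae_eq_closedBall (hν : IsBallDoubling ν D) (c : F) {r : ℝ} (hr : 0 < r) :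
    ball c r =ᵐ[ν] closedBall c r := by
  rw [← ball_union_sphere]
  exact (union_ae_eq_left_of_ae_eq_empty (ae_eq_empty.2 (hν.measure_sphere_eq_zero c hr))).symm

end NormedSpace
end IsBallDoubling

theorem continuousAt_measure_inter_ball {X : Type*} [PseudoMetricSpace X] [ProperSpace X]
    [MeasurableSpace X] [BorelSpace X] {ν : Measure X} [IsLocallyFiniteMeasure ν] {A : Set X}
    (hA : MeasurableSet A) {c : X} {r : ℝ} (hs : ν (sphere c r) = 0) :
    ContinuousAt (fun p : X × ℝ => ν (A ∩ ball p.1 p.2)) (c, r) := by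
  refine tendsto_measure_of_ae_tendsto_indicator (B := ball c (1 + r + 1)) _
    (hA.inter measurableSet_ball) (fun _ => hA.inter measurableSet_ball) measurableSet_ball
    measure_ball_lt_top.ne ?_ ?_
  · filter_upwards [prod_mem_nhds (ball_mem_nhds c one_pos) (Iio_mem_nhds (lt_add_one r))]
      with p ⟨hp₁, hp₂⟩
    rw [mem_ball] at hp₁
    rw [mem_Iio] at hp₂
    exact inter_subset_right.trans (ball_subset_ball' (by linarith))
  · filter_upwards [measure_eq_zero_iff_ae_notMem.1 hs] with y hy
    have hcont : Continuous fun p : X × ℝ => dist y p.1 := by fun_prop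
    rcases lt_or_gt_of_ne (show dist y c ≠ r from hy) with h | h
    · filter_upwards [hcont.continuousAt.eventually_lt continuousAt_snd h] with p hp
      simp [hp, h]
    · filter_upwards [continuousAt_snd.eventually_lt hcont.continuousAt h] with p hp
      simp [hp.not_gt, h.not_gt]

namespace IsBallDoubling

variable {F : Type*} [NormedAddCommGroup F] [NormedSpace ℝ F] [ProperSpace F]
  [MeasurableSpace F] [BorelSpace F] {ν : Measure F} [IsLocallyFiniteMeasure ν] {D : ℝ≥0}
  {A : Set F} {g : ℝ≥0∞}

theorem ae_eventually_mul_measure_ball_lt (hν : IsBallDoubling ν D) (hA : MeasurableSet A)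
    (hg : g < 1) (c : F) {r : ℝ} (hr : 0 < r) :
    ∀ᵐ x ∂ν, x ∈ A ∩ ball c r → ∀ᶠ t in 𝓝[>] (0 : ℝ),
      g * ν (ball (AffineMap.lineMap x c t) (t * r)) <
        ν (A ∩ ball (AffineMap.lineMap x c t) (t * r)) := by
  have := hν.isUnifLocDoublingMeasure
  have hdensity := IsUnifLocDoublingMeasure.ae_tendsto_measure_inter_div ν A 1
  rw [ae_restrict_iff' hA] at hdensity
  filter_upwards [hdensity] with x hx ⟨hxA, hxc⟩
  have hlim := hx hxA (l := 𝓝[>] (0 : ℝ)) (fun t => AffineMap.lineMap x c t) (fun t => t * r)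
    (tendsto_nhdsWithin_iff.2 ⟨by simpa using
      ((continuous_mul_const r).tendsto 0).mono_left nhdsWithin_le_nhds,
      eventually_mem_nhdsWithin.mono fun t (ht : 0 < t) => mul_pos ht hr⟩)
    (eventually_mem_nhdsWithin.mono fun t (ht : 0 < t) => by
      rw [one_mul, mem_closedBall, dist_left_lineMap, Real.norm_of_nonneg ht.le]
      gcongr
      exact (mem_ball.1 hxc).le)
  filter_upwards [hlim.eventually_const_lt hg, eventually_mem_nhdsWithin] with t ht (ht0 : 0 < t)
  have hball := hν.ball_ae_eq_closedBall (AffineMap.lineMap x c t) (mul_pos ht0 hr)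
  rw [measure_congr hball, measure_congr ((ae_eq_refl A).inter hball)]
  exact ENNReal.mul_lt_of_lt_div ht

theorem exists_measure_inter_ball_eq (hν : IsBallDoubling ν D) (hA : MeasurableSet A)
    (hg : g ≠ ∞) {x c : F} {r : ℝ} (hr : 0 < r)
    (hlow : ν (A ∩ ball c r) ≤ g * ν (ball c r))
    (hhigh : ∀ᶠ t in 𝓝[>] (0 : ℝ), g * ν (ball (AffineMap.lineMap x c t) (t * r)) <
      ν (A ∩ ball (AffineMap.lineMap x c t) (t * r))) :
    ∃ t ∈ Ioc (0 : ℝ) 1, ν (A ∩ ball (AffineMap.lineMap x c t) (t * r)) =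
      g * ν (ball (AffineMap.lineMap x c t) (t * r)) := by
  -- Along the path `ball (lineMap x c t) (t * r)`, which shrinks from `ball c r` at `t = 1` to the
  -- point `x` at `t = 0`, the density of `A` passes from above `g` to at most `g`.
  obtain ⟨t₀, hhigh₀, ht₀, ht₀1⟩ := (hhigh.and (Ioo_mem_nhdsGT one_pos)).exists
  have hcont : ∀ B : Set F, MeasurableSet B → ContinuousOn
      (fun t : ℝ => ν (B ∩ ball (AffineMap.lineMap x c t) (t * r))) (Icc t₀ 1) := by
    intro B hB t ht
    have hball := continuousAt_measure_inter_ball hB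
      (hν.measure_sphere_eq_zero (AffineMap.lineMap x c t) (mul_pos (ht₀.trans_le ht.1) hr))
    have hpath : Continuous fun t : ℝ => ((AffineMap.lineMap x c t : F), t * r) :=
      AffineMap.lineMap_continuous.prodMk (continuous_mul_const r)
    exact (hball.comp (f := fun t : ℝ => ((AffineMap.lineMap x c t : F), t * r))
      hpath.continuousAt).continuousWithinAt
  have hcont_univ := hcont univ MeasurableSet.univ
  simp only [univ_inter] at hcont_univ
  obtain ⟨t, ht, heq⟩ := isPreconnected_Icc.intermediate_value₂ (right_mem_Icc.2 ht₀1.le)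
    (left_mem_Icc.2 ht₀1.le) (hcont A hA)
    ((ENNReal.continuous_const_mul hg).comp_continuousOn hcont_univ)
    (by simpa using hlow) hhigh₀.le
  exact ⟨t, ⟨ht₀.trans_le ht.1, ht.2⟩, heq⟩

theorem ae_exists_ball_measure_inter_eq (hν : IsBallDoubling ν D) (hA : MeasurableSet A)
    (hg : g < 1) {c : F} {r : ℝ} (hr : 0 < r) (hlow : ν (A ∩ ball c r) ≤ g * ν (ball c r)) :
    ∀ᵐ x ∂ν, x ∈ A ∩ ball c r → ∃ y s, 0 < s ∧ s ≤ r ∧ x ∈ ball y s ∧ ball y s ⊆ ball c r ∧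
      ν (A ∩ ball y s) = g * ν (ball y s) := by
  filter_upwards [hν.ae_eventually_mul_measure_ball_lt hA hg c hr] with x hx hxA
  obtain ⟨t, ⟨ht0, ht1⟩, heq⟩ := hν.exists_measure_inter_ball_eq hA hg.ne_top hr hlow (hx hxA)
  have hxc : dist x c < r := hxA.2
  refine ⟨AffineMap.lineMap x c t, t * r, mul_pos ht0 hr, mul_le_of_le_one_left hr.le ht1, ?_,
    ball_subset_ball' ?_, heq⟩
  · rw [mem_ball, dist_left_lineMap, Real.norm_of_nonneg ht0.le]
    gcongr
  · rw [dist_lineMap_right, Real.norm_of_nonneg (sub_nonneg.2 ht1)]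
    nlinarith

end IsBallDoubling

theorem mul_measure_le_of_exists_ball {X : Type*} [PseudoMetricSpace X] [MeasurableSpace X]
    [OpensMeasurableSpace X] [SecondCountableTopology X] {ν : Measure X} {A S U : Set X}
    {κ : ℝ≥0∞} {R : ℝ} (hA : MeasurableSet A)
    (h : ∀ᵐ x ∂ν, x ∈ S → ∃ y s, 0 < s ∧ s ≤ R ∧ x ∈ ball y s ∧ ball y s ⊆ U ∧
      κ * ν (closedBall y (4 * s)) ≤ ν (ball y s \ A)) :
    κ * ν S ≤ ν (U \ A) := by
  set T : Set (X × ℝ) := {p | 0 < p.2 ∧ p.2 ≤ R ∧ ball p.1 p.2 ⊆ U ∧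
    κ * ν (closedBall p.1 (4 * p.2)) ≤ ν (ball p.1 p.2 \ A)}
  obtain ⟨u, huT, hdisj, hcover⟩ := Vitali.exists_disjoint_subfamily_covering_enlargement_closedBall
    T Prod.fst Prod.snd R (fun p hp => hp.2.1) 4 (by norm_num)
  have hu : u.Countable := hdisj.countable_of_nonempty_interior fun p hp =>
    ⟨p.1, ball_subset_interior_closedBall (mem_ball_self (huT hp).1)⟩
  have hdisj' : u.PairwiseDisjoint fun p => ball p.1 p.2 \ A :=
    hdisj.mono fun p => sdiff_subset.trans ball_subset_closedBall
  calc κ * ν S ≤ κ * ν (⋃ p ∈ u, closedBall p.1 (4 * p.2)) := by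
        refine mul_le_mul_right (measure_mono_ae (h.mono fun x hx hxS => ?_)) κ
        obtain ⟨y, s, hs, hsR, hxs, hsU, hκ⟩ := hx hxS
        obtain ⟨p, hp, hsub⟩ := hcover (y, s) ⟨hs, hsR, hsU, hκ⟩
        exact mem_iUnion₂.2 ⟨p, hp, hsub (ball_subset_closedBall hxs)⟩
    _ ≤ κ * ∑' p : u, ν (closedBall p.1.1 (4 * p.1.2)) := by
        gcongr
        exact measure_biUnion_le ν hu _
    _ ≤ ∑' p : u, ν (ball p.1.1 p.1.2 \ A) := by
        rw [← ENNReal.tsum_mul_left]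
        exact ENNReal.tsum_le_tsum fun p => (huT p.2).2.2.2
    _ = ν (⋃ p ∈ u, ball p.1 p.2 \ A) :=
        (measure_biUnion hu hdisj' fun _ _ => measurableSet_ball.diff hA).symm
    _ ≤ ν (U \ A) := measure_mono <| iUnion₂_subset fun p hp =>
        sdiff_subset_sdiff_left (huT hp).2.2.1

theorem IsBallDoubling.mul_measure_inter_ball_le {F : Type*} [NormedAddCommGroup F]
    [NormedSpace ℝ F] [ProperSpace F] [MeasurableSpace F] [BorelSpace F] {ν : Measure F}
    [IsLocallyFiniteMeasure ν] {D : ℝ≥0} {A A' : Set F} {γ g : ℝ≥0∞} {c : F} {r : ℝ}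
    (hν : IsBallDoubling ν D) (hA : MeasurableSet A) (hγ : γ < g) (hg : g < 1) (hr : 0 < r)
    (hlow : ν (A ∩ ball c r) ≤ g * ν (ball c r))
    (hA' : ∀ y s, 0 < s → γ * ν (ball y s) < ν (A ∩ ball y s) → ball y s ⊆ A') :
    (1 + ((D : ℝ≥0∞) ^ 3)⁻¹ * (1 - g)) * ν (A ∩ ball c r) ≤ ν (A' ∩ ball c r) := by
  rcases eq_or_ne ν 0 with rfl | hν0
  · simp
  have hgood : ∀ᵐ x ∂ν, x ∈ A ∩ ball c r → ∃ y s, 0 < s ∧ s ≤ r ∧ x ∈ ball y s ∧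
      ball y s ⊆ A' ∩ ball c r ∧ ν (A ∩ ball y s) = g * ν (ball y s) := by
    filter_upwards [hν.ae_exists_ball_measure_inter_eq hA hg hr hlow] with x hx hxA
    obtain ⟨y, s, hs, hsr, hxs, hsub, heq⟩ := hx hxA
    refine ⟨y, s, hs, hsr, hxs, subset_inter (hA' y s hs ?_) hsub, heq⟩
    rw [heq]
    exact ENNReal.mul_lt_mul_left (hν.measure_ball_pos hν0 _ hs).ne' measure_ball_lt_top.ne hγ
  have hgain : ((D : ℝ≥0∞) ^ 3)⁻¹ * (1 - g) * ν (A ∩ ball c r) ≤ ν ((A' ∩ ball c r) \ A) := by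
    refine mul_measure_le_of_exists_ball hA (hgood.mono fun x hx hxA => ?_) (R := r)
    obtain ⟨y, s, hs, hsr, hxs, hsub, heq⟩ := hx hxA
    refine ⟨y, s, hs, hsr, hxs, hsub, ?_⟩
    calc ((D : ℝ≥0∞) ^ 3)⁻¹ * (1 - g) * ν (closedBall y (4 * s))
        ≤ (1 - g) * ν (ball y s) := by
          rw [mul_right_comm, mul_comm]
          gcongr
          exact hν.inv_pow_mul_measure_closedBall_le 3 hs (by rw [dist_self]; linarith)
      _ = ν (ball y s \ A) := by
          rw [ENNReal.sub_mul fun _ _ => measure_ball_lt_top.ne, one_mul, ← heq]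
          refine ENNReal.sub_eq_of_eq_add (measure_ne_top_of_subset inter_subset_right
            measure_ball_lt_top.ne) ?_
          rw [inter_comm, measure_sdiff_add_inter _ hA]
  calc (1 + ((D : ℝ≥0∞) ^ 3)⁻¹ * (1 - g)) * ν (A ∩ ball c r)
      ≤ ν ((A' ∩ ball c r) ∩ A) + ν ((A' ∩ ball c r) \ A) := by
        rw [add_mul, one_mul]
        refine add_le_add (measure_mono_ae (hgood.mono fun x hx hxA => ?_)) hgain
        obtain ⟨y, s, -, -, hxs, hsub, -⟩ := hx hxA
        exact ⟨hsub hxs, hxA.1⟩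
    _ = ν (A' ∩ ball c r) := measure_inter_add_sdiff _ hA

end BallDoubling

section MaximalOperator

variable {n : ℕ} {μ : Measure (EuclideanSpace ℝ (Fin n))}
  {𝔅 : Set (Set (EuclideanSpace ℝ (Fin n)))} {E : Set (EuclideanSpace ℝ (Fin n))}

theorem lt_maxOp_iff {f : EuclideanSpace ℝ (Fin n) → ℝ} {a : ℝ≥0∞}
    {x : EuclideanSpace ℝ (Fin n)} :
    a < maxOp μ 𝔅 f x ↔
      ∃ B ∈ 𝔅, x ∈ B ∧ 0 < μ B ∧ a < (∫⁻ y in B, ENNReal.ofReal |f y| ∂μ) / μ B := by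
  simp only [maxOp, lt_iSup_iff, exists_prop]

theorem isOpen_setOf_lt_maxOp (h𝔅 : ∀ B ∈ 𝔅, IsOpen B) (f : EuclideanSpace ℝ (Fin n) → ℝ)
    (a : ℝ≥0∞) : IsOpen {x | a < maxOp μ 𝔅 f x} := by
  refine isOpen_iff_mem_nhds.2 fun x hx => ?_
  obtain ⟨B, hB, hxB, hμB, haB⟩ := lt_maxOp_iff.1 hx
  filter_upwards [(h𝔅 B hB).mem_nhds hxB] with y hy
  exact lt_maxOp_iff.2 ⟨B, hB, hy, hμB, haB⟩

theorem measurable_maxOp (h𝔅 : ∀ B ∈ 𝔅, IsOpen B) (f : EuclideanSpace ℝ (Fin n) → ℝ) :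
    Measurable (maxOp μ 𝔅 f) :=
  measurable_of_Ioi fun a => (isOpen_setOf_lt_maxOp h𝔅 f a).measurableSet

theorem ofReal_abs_indicator_one {α : Type*} (E : Set α) (x : α) :
    ENNReal.ofReal |E.indicator (1 : α → ℝ) x| = E.indicator (1 : α → ℝ≥0∞) x := by
  by_cases hx : x ∈ E <;> simp [hx]

/-- The halo of `E` at level `γ`: the superlevel set of the maximal function of `E`. Iterating
`halo μ 𝔅 γ` yields the iterated halos of `E`. -/
def halo (μ : Measure (EuclideanSpace ℝ (Fin n))) (𝔅 : Set (Set (EuclideanSpace ℝ (Fin n))))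
    (γ : ℝ≥0∞) (E : Set (EuclideanSpace ℝ (Fin n))) : Set (EuclideanSpace ℝ (Fin n)) :=
  {x | γ < maxOp μ 𝔅 (E.indicator 1) x}

theorem mem_halo_iff (hE : MeasurableSet E) {γ : ℝ≥0∞} {x : EuclideanSpace ℝ (Fin n)} :
    x ∈ halo μ 𝔅 γ E ↔ ∃ B ∈ 𝔅, x ∈ B ∧ 0 < μ B ∧ γ < μ (E ∩ B) / μ B := by
  simp only [halo, mem_ofPred_eq, lt_maxOp_iff, ofReal_abs_indicator_one,
    lintegral_indicator_one hE, Measure.restrict_apply hE]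

theorem measure_inter_div_le_maxOp_indicator (hE : MeasurableSet E)
    {B : Set (EuclideanSpace ℝ (Fin n))} (hB : B ∈ 𝔅) (hμB : 0 < μ B)
    {x : EuclideanSpace ℝ (Fin n)} (hx : x ∈ B) :
    μ (E ∩ B) / μ B ≤ maxOp μ 𝔅 (E.indicator 1) x :=
  le_of_forall_lt fun _ hγ => (mem_halo_iff hE).2 ⟨B, hB, hx, hμB, hγ⟩

theorem measurableSet_halo (h𝔅 : ∀ B ∈ 𝔅, IsOpen B) (γ : ℝ≥0∞)
    (E : Set (EuclideanSpace ℝ (Fin n))) : MeasurableSet (halo μ 𝔅 γ E) :=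
  (isOpen_setOf_lt_maxOp h𝔅 _ γ).measurableSet

theorem measurableSet_iterate_halo (h𝔅 : ∀ B ∈ 𝔅, IsOpen B) (γ : ℝ≥0∞) (hE : MeasurableSet E) :
    ∀ k : ℕ, MeasurableSet ((halo μ 𝔅 γ)^[k] E)
  | 0 => hE
  | k + 1 => by
    rw [Function.iterate_succ_apply']
    exact measurableSet_halo h𝔅 γ _

theorem subset_halo {B : Set (EuclideanSpace ℝ (Fin n))} {γ : ℝ≥0∞} (hE : MeasurableSet E)
    (hB : B ∈ 𝔅) (hμB : μ B ≠ ∞) (h : γ * μ B < μ (E ∩ B)) : B ⊆ halo μ 𝔅 γ E := by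
  have hpos : μ B ≠ 0 := fun h0 =>
    (h.trans_le ((measure_mono inter_subset_right).trans_eq h0)).not_ge zero_le
  exact fun x hx => (mem_halo_iff hE).2 ⟨B, hB, hx, pos_iff_ne_zero.2 hpos,
    (ENNReal.lt_div_iff_mul_lt (.inl hpos) (.inl hμB)).2 h⟩

end MaximalOperator

section IteratedHalo

variable {n : ℕ} {μ : Measure (EuclideanSpace ℝ (Fin n))}
  {𝔅 : Set (Set (EuclideanSpace ℝ (Fin n)))} {E : Set (EuclideanSpace ℝ (Fin n))}
  {γ g c δ : ℝ≥0∞}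

theorem measure_iterate_halo_le (h𝔅 : ∀ B ∈ 𝔅, IsOpen B)
    (hc : ∀ A, MeasurableSet A → μ (halo μ 𝔅 γ A) ≤ c * μ A) (hE : MeasurableSet E) (k : ℕ) :
    μ ((halo μ 𝔅 γ)^[k] E) ≤ c ^ k * μ E := by
  induction k with
  | zero => simp
  | succ k ih =>
    rw [Function.iterate_succ_apply', pow_succ', mul_assoc]
    exact (hc _ (measurableSet_iterate_halo h𝔅 γ hE k)).trans (by gcongr)

theorem lt_or_pow_mul_measure_inter_le {B : Set (EuclideanSpace ℝ (Fin n))}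
    (h𝔅 : ∀ B ∈ 𝔅, IsOpen B) (hB : B ∈ 𝔅) (hμB : μ B ≠ ∞) (hγg : γ ≤ g)
    (hgrow : ∀ A, MeasurableSet A → μ (A ∩ B) ≤ g * μ B →
      (1 + δ) * μ (A ∩ B) ≤ μ (halo μ 𝔅 γ A ∩ B))
    (hE : MeasurableSet E) (k : ℕ) :
    g * μ B < μ ((halo μ 𝔅 γ)^[k] E ∩ B) ∨
      (1 + δ) ^ k * μ (E ∩ B) ≤ μ ((halo μ 𝔅 γ)^[k] E ∩ B) := by
  induction k with
  | zero => simp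
  | succ k ih =>
    have hmeas := measurableSet_iterate_halo (μ := μ) h𝔅 γ hE k
    rw [Function.iterate_succ_apply']
    rcases lt_or_ge (g * μ B) (μ ((halo μ 𝔅 γ)^[k] E ∩ B)) with hlt | hle
    · have hsub : B ⊆ halo μ 𝔅 γ ((halo μ 𝔅 γ)^[k] E) :=
        subset_halo hmeas hB hμB ((mul_le_mul_left hγg (μ B)).trans_lt hlt)
      rw [inter_eq_right.2 hsub]
      exact .inl (hlt.trans_le (measure_mono inter_subset_right))
    · refine .inr ?_
      calc (1 + δ) ^ (k + 1) * μ (E ∩ B) = (1 + δ) * ((1 + δ) ^ k * μ (E ∩ B)) := by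
            rw [pow_succ', mul_assoc]
        _ ≤ (1 + δ) * μ ((halo μ 𝔅 γ)^[k] E ∩ B) := by
            gcongr
            exact ih.resolve_left hle.not_gt
        _ ≤ μ (halo μ 𝔅 γ ((halo μ 𝔅 γ)^[k] E) ∩ B) := hgrow _ hmeas hle

theorem halo_subset_iterate_halo (h𝔅 : ∀ B ∈ 𝔅, IsOpen B) (hμ𝔅 : ∀ B ∈ 𝔅, μ B ≠ ∞)
    (hγg : γ ≤ g)
    (hgrow : ∀ A, MeasurableSet A → ∀ B ∈ 𝔅, μ (A ∩ B) ≤ g * μ B →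
      (1 + δ) * μ (A ∩ B) ≤ μ (halo μ 𝔅 γ A ∩ B))
    (hE : MeasurableSet E) {ε : ℝ≥0∞} {k : ℕ} (hk : 1 < (1 + δ) ^ k * ε) :
    halo μ 𝔅 ε E ⊆ (halo μ 𝔅 γ)^[k + 1] E := by
  intro x hx
  obtain ⟨B, hB, hxB, hμB, hdens⟩ := (mem_halo_iff hE).1 hx
  rw [Function.iterate_succ_apply']
  refine subset_halo (measurableSet_iterate_halo h𝔅 γ hE k) hB (hμ𝔅 B hB) ?_ hxB
  refine (mul_le_mul_left hγg (μ B)).trans_lt ?_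
  refine (lt_or_pow_mul_measure_inter_le h𝔅 hB (hμ𝔅 B hB) hγg (fun A hA => hgrow A hA B hB)
    hE k).resolve_right fun hle => lt_irrefl (μ B) ?_
  calc μ B = 1 * μ B := (one_mul _).symm
    _ < (1 + δ) ^ k * ε * μ B := ENNReal.mul_lt_mul_left hμB.ne' (hμ𝔅 B hB) hk
    _ ≤ (1 + δ) ^ k * μ (E ∩ B) := by
        rw [mul_assoc]
        gcongr
        exact (ENNReal.mul_lt_of_lt_div hdens).le
    _ ≤ μ B := hle.trans (measure_mono inter_subset_right)

theorem exists_measure_halo_pow_le (h𝔅 : ∀ B ∈ 𝔅, IsOpen B) (hμ𝔅 : ∀ B ∈ 𝔅, μ B ≠ ∞)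
    (hγg : γ ≤ g) (hδ : δ ≠ 0)
    (hgrow : ∀ A, MeasurableSet A → ∀ B ∈ 𝔅, μ (A ∩ B) ≤ g * μ B →
      (1 + δ) * μ (A ∩ B) ≤ μ (halo μ 𝔅 γ A ∩ B))
    (hc : ∀ A, MeasurableSet A → μ (halo μ 𝔅 γ A) ≤ c * μ A) :
    ∃ K : ℕ, ∀ E, MeasurableSet E → ∀ j : ℕ,
      μ (halo μ 𝔅 (4⁻¹ ^ (j + 1)) E) ≤ c * (c ^ K) ^ (j + 1) * μ E := by
  obtain ⟨K, hK⟩ : ∃ K : ℕ, 4 < (1 + δ) ^ K :=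
    ((ENNReal.tendsto_pow_atTop_nhds_top_iff.2 (ENNReal.lt_add_right ENNReal.one_ne_top hδ)
      ).eventually_const_lt (by simp : (4 : ℝ≥0∞) < ∞)).exists
  refine ⟨K, fun E hE j => ?_⟩
  have hlevel : 1 < (1 + δ) ^ (K * (j + 1)) * (4⁻¹ : ℝ≥0∞) ^ (j + 1) := by
    rw [pow_mul, ← mul_pow]
    refine one_lt_pow₀ ?_ j.succ_ne_zero
    rwa [← div_eq_mul_inv, ENNReal.lt_div_iff_mul_lt (by simp) (by simp), one_mul]
  calc μ (halo μ 𝔅 (4⁻¹ ^ (j + 1)) E) ≤ μ ((halo μ 𝔅 γ)^[K * (j + 1) + 1] E) :=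
        measure_mono (halo_subset_iterate_halo h𝔅 hμ𝔅 hγg hgrow hE hlevel)
    _ ≤ c ^ (K * (j + 1) + 1) * μ E := measure_iterate_halo_le h𝔅 hc hE _
    _ = c * (c ^ K) ^ (j + 1) * μ E := by rw [pow_succ', pow_mul]

end IteratedHalo

section GaugeNorm

open Metric

theorem image_ball_eq_vadd_smul {E F 𝓕 : Type*} [AddCommGroup E] [Module ℝ E]
    [NormedAddCommGroup F] [NormedSpace ℝ F] [FunLike 𝓕 F E] [LinearMapClass 𝓕 ℝ F E] (L : 𝓕)
    (c : F) {r : ℝ} (hr : 0 < r) : L '' ball c r = L c +ᵥ r • L '' ball 0 1 := by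
  rw [← affinity_unitBall hr, image_vadd_distrib, image_smul_set]

universe u

variable {E : Type u} [NormedAddCommGroup E] [NormedSpace ℝ E] [FiniteDimensional ℝ E]

theorem exists_continuousLinearEquiv_norm_eq {F : Type u} [AddCommGroup F] [Module ℝ F]
    (e : F ≃ₗ[ℝ] E) (p : Seminorm ℝ E) (hp : ∀ x, p x = 0 → x = 0) :
    ∃ (G : Type u) (_ : NormedAddCommGroup G) (_ : NormedSpace ℝ G) (L : G ≃L[ℝ] E),
      ∀ y, ‖y‖ = p (L y) := by
  let q : AddGroupNorm F :=
    { (p.comp e.toLinearMap).toAddGroupSeminorm with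
      eq_zero_of_map_eq_zero' := fun y hy => e.map_eq_zero_iff.1 (hp (e y) hy) }
  let _ : NormedAddCommGroup F := q.toNormedAddCommGroup
  let _ : NormedSpace ℝ F := ⟨fun a y => (map_smul_eq_mul (p.comp e.toLinearMap) a y).le⟩
  have : FiniteDimensional ℝ F := e.symm.finiteDimensional
  exact ⟨F, inferInstance, inferInstance, e.toContinuousLinearEquiv, fun _ => rfl⟩

theorem exists_continuousLinearEquiv_image_ball_eq {K : Set E} (hne : K.Nonempty)
    (hbdd : Bornology.IsBounded K) (hopen : IsOpen K) (hconv : Convex ℝ K)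
    (hsymm : ∀ x ∈ K, -x ∈ K) :
    ∃ (F : Type u) (_ : NormedAddCommGroup F) (_ : NormedSpace ℝ F) (L : F ≃L[ℝ] E),
      L '' ball 0 1 = K := by
  have hbal : Balanced ℝ K := (balanced_iff_neg_mem hconv).2 hsymm
  have habs : Absorbent ℝ K := absorbent_nhds_zero (hopen.mem_nhds (hbal.zero_mem hne))
  obtain ⟨F, _, _, L, hL⟩ := exists_continuousLinearEquiv_norm_eq (LinearEquiv.refl ℝ E)
    (gaugeSeminorm hbal hconv habs)
    fun x hx => (gauge_eq_zero habs (NormedSpace.isVonNBounded_of_isBounded ℝ hbdd)).1 hx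
  refine ⟨F, inferInstance, inferInstance, L, ?_⟩
  rw [← gaugeSeminorm_ball_one (hs₀ := hbal) (hs₁ := hconv) (hs₂ := habs) hopen,
    L.image_eq_preimage_symm]
  ext x
  simp [hL]

end GaugeNorm

section SymmConvexBody

open Metric

/-- A bounded open convex set with a center of symmetry, that is, up to translation, the open unit
ball of a norm. -/
def IsSymmConvexBody {n : ℕ} (R : Set (EuclideanSpace ℝ (Fin n))) : Prop :=
  IsConvexBasisSet R ∧ ∃ z, MapsTo (Equiv.pointReflection z) R R

variable {n : ℕ} {R S : Set (EuclideanSpace ℝ (Fin n))}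

theorem IsAxisRect.isSymmConvexBody (hR : IsAxisRect R) : IsSymmConvexBody R := by
  obtain ⟨a, b, hab, rfl⟩ := hR
  have hpi : {x : EuclideanSpace ℝ (Fin n) | ∀ i, x i ∈ Ioo (a i) (b i)}
      = EuclideanSpace.equiv (Fin n) ℝ ⁻¹' univ.pi fun i => Ioo (a i) (b i) := by
    ext x; simp
  rw [hpi]
  refine ⟨⟨?_, ?_, ?_, ?_⟩, WithLp.toLp 2 fun i => (a i + b i) / 2, ?_⟩
  · exact (univ_pi_nonempty_iff.2 fun i => nonempty_Ioo.2 (hab i)).preimage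
      (EuclideanSpace.equiv (Fin n) ℝ).surjective
  · exact (EuclideanSpace.equiv (Fin n) ℝ).antilipschitz.isBounded_preimage
      (Bornology.IsBounded.pi fun i => isBounded_Ioo (a i) (b i))
  · exact (isOpen_set_pi finite_univ fun _ _ => isOpen_Ioo).preimage
      (EuclideanSpace.equiv (Fin n) ℝ).continuous
  · exact (convex_pi fun i _ => convex_Ioo _ _).linear_preimage
      (EuclideanSpace.equiv (Fin n) ℝ).toLinearMap
  · intro x hx i hi
    have hxi : x i ∈ Ioo (a i) (b i) := hx i hi
    change (a i + b i) / 2 - x i + (a i + b i) / 2 ∈ Ioo (a i) (b i)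
    constructor <;> linarith [hxi.1, hxi.2]

theorem IsSymmConvexBody.image_affineIsometryEquiv (hS : IsSymmConvexBody S)
    (φ : EuclideanSpace ℝ (Fin n) ≃ᵃⁱ[ℝ] EuclideanSpace ℝ (Fin n)) :
    IsSymmConvexBody (φ '' S) := by
  obtain ⟨⟨hne, hbdd, hopen, hconv⟩, z, hz⟩ := hS
  refine ⟨⟨hne.image φ, φ.lipschitz.isBounded_image hbdd, φ.toHomeomorph.isOpenMap S hopen,
    hconv.affine_image φ.toAffineEquiv.toAffineMap⟩, φ z, ?_⟩
  rintro _ ⟨x, hx, rfl⟩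
  refine ⟨Equiv.pointReflection z x, hz hx, ?_⟩
  rw [Equiv.pointReflection_apply, φ.map_vadd, φ.map_vsub, Equiv.pointReflection_apply]

theorem IsRect.isSymmConvexBody (hR : IsRect R) : IsSymmConvexBody R := by
  obtain ⟨f, S, hS, rfl⟩ := hR
  exact hS.isSymmConvexBody.image_affineIsometryEquiv f.toRealAffineIsometryEquiv

theorem IsSymmConvexBody.exists_eq_image_ball (hR : IsSymmConvexBody R) :
    ∃ (F : Type) (_ : NormedAddCommGroup F) (_ : NormedSpace ℝ F)
      (L : F ≃L[ℝ] EuclideanSpace ℝ (Fin n)) (c : F), R = L '' ball c 1 := by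
  obtain ⟨⟨hne, hbdd, hopen, hconv⟩, z, hz⟩ := hR
  obtain ⟨F, _, _, L, hL⟩ := exists_continuousLinearEquiv_image_ball_eq (K := -z +ᵥ R)
    hne.vadd_set (hbdd.vadd (-z)) (hopen.vadd (-z)) (hconv.vadd (-z)) fun x hx => by
      rw [mem_neg_vadd_set_iff] at hx ⊢
      simpa [Equiv.pointReflection_apply, add_comm] using hz hx
  refine ⟨F, inferInstance, inferInstance, L, L.symm z, ?_⟩
  rw [image_ball_eq_vadd_smul L _ one_pos, hL, one_smul, L.apply_symm_apply, vadd_neg_vadd]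

theorem IsSymmConvexBody.measure_ne_top {μ : Measure (EuclideanSpace ℝ (Fin n))}
    [IsLocallyFiniteMeasure μ] (hR : IsSymmConvexBody R) : μ R ≠ ∞ :=
  hR.1.2.1.measure_lt_top.ne

section Transport

variable {μ : Measure (EuclideanSpace ℝ (Fin n))}
  {𝔊 : Set (Set (EuclideanSpace ℝ (Fin n)))} {F : Type*} [NormedAddCommGroup F] [NormedSpace ℝ F]
  {L : F ≃L[ℝ] EuclideanSpace ℝ (Fin n)}

theorem HomothecyInvariant.image_ball_mem (h𝔊 : HomothecyInvariant 𝔊) {c : F}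
    (hL : L '' ball c 1 ∈ 𝔊) (y : F) {r : ℝ} (hr : 0 < r) : L '' ball y r ∈ 𝔊 := by
  have hunit : L '' ball 0 1 ∈ 𝔊 := by
    have h := (h𝔊 _ hL).1 (-L c)
    rwa [image_ball_eq_vadd_smul L c one_pos, one_smul, neg_vadd_vadd] at h
  rw [image_ball_eq_vadd_smul L y hr]
  exact (h𝔊 _ ((h𝔊 _ hunit).2 r hr)).1 _

variable [MeasurableSpace F] [BorelSpace F]

theorem map_symm_apply_eq_measure_image (μ : Measure (EuclideanSpace ℝ (Fin n))) (s : Set F) :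
    μ.map L.symm s = μ (L '' s) := by
  rw [L.image_eq_preimage_symm]
  exact L.symm.toHomeomorph.toMeasurableEquiv.map_apply s

theorem DoublingWrt.isBallDoubling_map {Δ : ℝ} (hμ : DoublingWrt μ 𝔊 Δ)
    (hL : ∀ y r, 0 < r → L '' ball y r ∈ 𝔊) : IsBallDoubling (μ.map L.symm) Δ.toNNReal := by
  intro y r hr
  have hσ : L '' ball y (2 * r) = -L y +ᵥ (2 : ℝ) • L '' ball y r := by
    have hball : ball y (2 * r) = -y +ᵥ (2 : ℝ) • ball y r := by
      rw [smul_ball two_ne_zero, vadd_ball, Real.norm_two]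
      congr 1
      rw [vadd_eq_add, two_smul, neg_add_cancel_left]
    rw [hball, image_vadd_distrib, image_smul_set, map_neg]
  rw [map_symm_apply_eq_measure_image, map_symm_apply_eq_measure_image, hσ]
  refine hμ _ (hL y r hr) _ ?_
  rw [← hσ]
  gcongr
  linarith

end Transport

theorem mul_measure_inter_le_measure_halo_inter {μ : Measure (EuclideanSpace ℝ (Fin n))}
    [IsLocallyFiniteMeasure μ] {𝔊 : Set (Set (EuclideanSpace ℝ (Fin n)))}
    (hG : ∀ R ∈ 𝔊, IsSymmConvexBody R) (h𝔊 : HomothecyInvariant 𝔊) {Δ : ℝ}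
    (hμ : DoublingWrt μ 𝔊 Δ) {γ g : ℝ≥0∞} (hγ : γ < g) (hg : g < 1)
    {A : Set (EuclideanSpace ℝ (Fin n))} (hA : MeasurableSet A) (hR : R ∈ 𝔊)
    (hlow : μ (A ∩ R) ≤ g * μ R) :
    (1 + ((Δ.toNNReal : ℝ≥0∞) ^ 3)⁻¹ * (1 - g)) * μ (A ∩ R) ≤ μ (halo μ 𝔊 γ A ∩ R) := by
  obtain ⟨F, _, _, L, c, rfl⟩ := (hG R hR).exists_eq_image_ball
  have hL : ∀ y r, 0 < r → L '' ball y r ∈ 𝔊 := fun y r hr => h𝔊.image_ball_mem hR y hr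
  let _ : MeasurableSpace F := borel F
  have : BorelSpace F := ⟨rfl⟩
  have : FiniteDimensional ℝ F := L.symm.toLinearEquiv.finiteDimensional
  have : ProperSpace F := FiniteDimensional.proper ℝ F
  have : IsFiniteMeasureOnCompacts (μ.map L.symm) :=
    Measure.IsFiniteMeasureOnCompacts.map μ L.symm.toHomeomorph
  have hmap : ∀ B y s, μ.map L.symm (L ⁻¹' B ∩ ball y s) = μ (B ∩ L '' ball y s) := fun B y s => by
    rw [map_symm_apply_eq_measure_image, image_preimage_inter]
  have hgrow := (hμ.isBallDoubling_map hL).mul_measure_inter_ball_le (A := L ⁻¹' A)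
    (A' := L ⁻¹' halo μ 𝔊 γ A) (c := c) (L.continuous.measurable hA) hγ hg one_pos
  simp only [hmap, map_symm_apply_eq_measure_image, ← image_subset_iff] at hgrow
  exact hgrow hlow fun y s hs => subset_halo hA (hL y s hs) (hG _ (hL y s hs)).measure_ne_top

end SymmConvexBody

section DyadicLayerCake

theorem two_zpow_rpow (m : ℤ) (p : ℝ) : ((2 : ℝ≥0∞) ^ m) ^ p = ((2 : ℝ≥0∞) ^ p) ^ m := by
  rw [← ENNReal.rpow_intCast, ← ENNReal.rpow_mul, mul_comm, ENNReal.rpow_mul, ENNReal.rpow_intCast]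

theorem exists_two_zpow_lt_le {y : ℝ≥0∞} (h0 : y ≠ 0) (htop : y ≠ ∞) :
    ∃ m : ℤ, 2 ^ m < y ∧ y ≤ 2 ^ (m + 1) :=
  ENNReal.exists_mem_Ioc_zpow h0 htop ENNReal.one_lt_two (by simp)

theorem lt_of_two_zpow_lt {m k : ℤ} (h : (2 : ℝ≥0∞) ^ m < 2 ^ k) : m < k :=
  (ENNReal.monotone_zpow ENNReal.one_lt_two.le).reflect_lt h

theorem rpow_le_tsum_indicator {p : ℝ} (hp : 0 < p) (y : ℝ≥0∞) :
    y ^ p ≤ ∑' m : ℤ, ((2 : ℝ≥0∞) ^ p) ^ (m + 1) * (Ioi (2 ^ m)).indicator 1 y := by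
  have hterm : ∀ {m : ℤ}, 2 ^ m < y → (2 ^ (m + 1)) ^ p ≤
      ∑' m : ℤ, ((2 : ℝ≥0∞) ^ p) ^ (m + 1) * (Ioi (2 ^ m)).indicator 1 y := fun {m} hm => by
    refine le_trans ?_ (ENNReal.le_tsum m)
    rw [indicator_of_mem (mem_Ioi.2 hm), Pi.one_apply, mul_one, two_zpow_rpow]
  rcases eq_or_ne y 0 with rfl | h0
  · simp [hp]
  rcases eq_or_ne y ∞ with rfl | htop
  · have hone : 1 ≤ (2 : ℝ≥0∞) ^ p := ENNReal.one_le_rpow ENNReal.one_lt_two.le hp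
    calc (∞ : ℝ≥0∞) ^ p ≤ ∑' _ : ℕ, 1 := by
          rw [ENNReal.tsum_const_eq_top_of_ne_zero one_ne_zero]
          exact le_top
      _ ≤ ∑' k : ℕ, ((2 : ℝ≥0∞) ^ p) ^ ((k : ℤ) + 1) * (Ioi (2 ^ (k : ℤ))).indicator 1 ∞ := by
          refine ENNReal.tsum_le_tsum fun k => ?_
          rw [indicator_of_mem (mem_Ioi.2 (by simp)), Pi.one_apply, mul_one]
          exact_mod_cast one_le_pow₀ hone
      _ ≤ _ := ENNReal.tsum_comp_le_tsum_of_injective Nat.cast_injective _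
  · obtain ⟨m, hlt, hle⟩ := exists_two_zpow_lt_le h0 htop
    exact (ENNReal.rpow_le_rpow hle hp.le).trans (hterm hlt)

theorem tsum_indicator_le_rpow {p : ℝ} (hp : 0 < p) (y : ℝ≥0∞) :
    ∑' m : ℤ, ((2 : ℝ≥0∞) ^ p) ^ m * (Ioi (2 ^ m)).indicator 1 y ≤
      (1 - ((2 : ℝ≥0∞) ^ p)⁻¹)⁻¹ * y ^ p := by
  rcases eq_or_ne y 0 with rfl | h0
  · simp
  rcases eq_or_ne y ∞ with rfl | htop
  · rw [ENNReal.top_rpow_of_pos hp, ENNReal.mul_top (by simp)]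
    exact le_top
  obtain ⟨M, hlt, hle⟩ := exists_two_zpow_lt_le h0 htop
  have ha0 : (2 : ℝ≥0∞) ^ p ≠ 0 := by simp
  have ha : (2 : ℝ≥0∞) ^ p ≠ ∞ := by simp
  have hsupp : (Function.support fun m : ℤ =>
      ((2 : ℝ≥0∞) ^ p) ^ m * (Ioi (2 ^ m)).indicator (1 : ℝ≥0∞ → ℝ≥0∞) y) ⊆
      range fun k : ℕ => M - (k : ℤ) := by
    intro m hm
    have hmy : 2 ^ m < y := by
      by_contra h
      exact hm (by simp [h])
    have hmM : m < M + 1 := lt_of_two_zpow_lt (hmy.trans_le hle)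
    exact ⟨(M - m).toNat, by simp; omega⟩
  have hinj : Function.Injective fun k : ℕ => M - (k : ℤ) := fun i j h => by
    simpa using h
  rw [← hinj.tsum_eq hsupp]
  calc ∑' k : ℕ, ((2 : ℝ≥0∞) ^ p) ^ (M - k : ℤ) * (Ioi (2 ^ (M - k : ℤ))).indicator 1 y
      ≤ ∑' k : ℕ, ((2 : ℝ≥0∞) ^ p) ^ M * (((2 : ℝ≥0∞) ^ p)⁻¹) ^ k := by
        refine ENNReal.tsum_le_tsum fun k => ?_
        rw [ENNReal.zpow_sub ha0 ha, zpow_natCast, ← ENNReal.inv_pow]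
        exact mul_le_of_le_one_right' (indicator_le_self' (by simp) y)
    _ = (1 - ((2 : ℝ≥0∞) ^ p)⁻¹)⁻¹ * (2 ^ M) ^ p := by
        rw [ENNReal.tsum_mul_left, ENNReal.tsum_geometric, mul_comm, two_zpow_rpow]
    _ ≤ (1 - ((2 : ℝ≥0∞) ^ p)⁻¹)⁻¹ * y ^ p := by gcongr

theorem le_two_zpow_add_tsum_indicator {y : ℝ≥0∞} (hy : y ≠ ∞) (m : ℤ) :
    y ≤ 2 ^ m + ∑' j : ℕ, 2 ^ (m + j + 1) * (Ioi (2 ^ (m + j))).indicator 1 y := by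
  rcases le_or_gt y (2 ^ m) with hle | hlt
  · exact hle.trans le_self_add
  obtain ⟨k, hk, hk'⟩ := exists_two_zpow_lt_le (zero_le.trans_lt hlt).ne' hy
  have hmk : m < k + 1 := lt_of_two_zpow_lt (hlt.trans_le hk')
  obtain ⟨j, rfl⟩ := Int.le.dest (Int.lt_add_one_iff.1 hmk)
  refine le_add_left (le_trans ?_ (ENNReal.le_tsum j))
  rwa [indicator_of_mem (mem_Ioi.2 hk), Pi.one_apply, mul_one]

variable {α : Type*} [MeasurableSpace α] {ν : Measure α} {F : α → ℝ≥0∞}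

theorem lintegral_tsum_mul_indicator_Ioi {ι : Type*} [Countable ι] (hF : Measurable F)
    (b t : ι → ℝ≥0∞) :
    ∫⁻ x, ∑' i, b i * (Ioi (t i)).indicator 1 (F x) ∂ν = ∑' i, b i * ν {x | t i < F x} := by
  have hind : ∀ i, Measurable fun x => (Ioi (t i)).indicator (1 : ℝ≥0∞ → ℝ≥0∞) (F x) := fun i =>
    (measurable_one.indicator measurableSet_Ioi).comp hF
  rw [lintegral_tsum fun i => ((hind i).const_mul (b i)).aemeasurable]
  refine tsum_congr fun i => (lintegral_const_mul (b i) (hind i)).trans ?_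
  exact congrArg (b i * ·) (lintegral_indicator_one (hF measurableSet_Ioi))

theorem lintegral_rpow_le_tsum_measure_lt (hF : Measurable F) {p : ℝ} (hp : 0 < p) :
    ∫⁻ x, F x ^ p ∂ν ≤ ∑' m : ℤ, ((2 : ℝ≥0∞) ^ p) ^ (m + 1) * ν {x | 2 ^ m < F x} :=
  (lintegral_mono fun x => rpow_le_tsum_indicator hp (F x)).trans_eq
    (lintegral_tsum_mul_indicator_Ioi hF _ _)

theorem tsum_measure_lt_le_lintegral_rpow (hF : Measurable F) {p : ℝ} (hp : 0 < p) :
    ∑' m : ℤ, ((2 : ℝ≥0∞) ^ p) ^ m * ν {x | 2 ^ m < F x} ≤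
      (1 - ((2 : ℝ≥0∞) ^ p)⁻¹)⁻¹ * ∫⁻ x, F x ^ p ∂ν := by
  rw [← lintegral_tsum_mul_indicator_Ioi hF, ← lintegral_const_mul _ (hF.pow_const p)]
  exact lintegral_mono fun x => tsum_indicator_le_rpow hp (F x)

end DyadicLayerCake

theorem tsum_zpow_mul_tsum_pow_mul {a : ℝ≥0∞} (ha0 : a ≠ 0) (ha : a ≠ ∞) (b : ℝ≥0∞)
    (d : ℤ → ℝ≥0∞) :
    ∑' m : ℤ, a ^ m * ∑' j : ℕ, b ^ j * d (m + j) = (1 - b / a)⁻¹ * ∑' k : ℤ, a ^ k * d k := by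
  calc ∑' m : ℤ, a ^ m * ∑' j : ℕ, b ^ j * d (m + j)
      = ∑' j : ℕ, ∑' m : ℤ, (b / a) ^ j * (a ^ (m + j) * d (m + j)) := by
        simp only [← ENNReal.tsum_mul_left]
        rw [ENNReal.tsum_comm]
        refine tsum_congr fun j => tsum_congr fun m => ?_
        have hcancel : a ^ j * a⁻¹ ^ j = 1 := by
          rw [← mul_pow, ENNReal.mul_inv_cancel ha0 ha, one_pow]
        rw [ENNReal.zpow_add ha0 ha, zpow_natCast, div_eq_mul_inv, mul_pow]
        calc a ^ m * (b ^ j * d (m + j)) = a ^ m * (b ^ j * d (m + j)) * 1 := (mul_one _).symm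
          _ = b ^ j * a⁻¹ ^ j * (a ^ m * a ^ j * d (m + j)) := by rw [← hcancel]; ring
    _ = ∑' j : ℕ, (b / a) ^ j * ∑' k : ℤ, a ^ k * d k := by
        refine tsum_congr fun j => ?_
        rw [ENNReal.tsum_mul_left]
        exact congrArg ((b / a) ^ j * ·) ((Equiv.addRight (j : ℤ)).tsum_eq fun k => a ^ k * d k)
    _ = (1 - b / a)⁻¹ * ∑' k : ℤ, a ^ k * d k := by
        rw [ENNReal.tsum_mul_right, ENNReal.tsum_geometric]

section Interpolation

variable {n : ℕ} {μ : Measure (EuclideanSpace ℝ (Fin n))}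
  {𝔅 : Set (Set (EuclideanSpace ℝ (Fin n)))}

theorem maxOp_le_add_tsum_maxOp_indicator {ι : Type*} [Countable ι]
    {f : EuclideanSpace ℝ (Fin n) → ℝ} {b : ℝ≥0∞} {w : ι → ℝ≥0∞}
    {E : ι → Set (EuclideanSpace ℝ (Fin n))} (hE : ∀ i, MeasurableSet (E i))
    (hf : ∀ y, ENNReal.ofReal |f y| ≤ b + ∑' i, w i * (E i).indicator 1 y)
    (x : EuclideanSpace ℝ (Fin n)) :
    maxOp μ 𝔅 f x ≤ b + ∑' i, w i * maxOp μ 𝔅 ((E i).indicator 1) x := by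
  refine iSup_le fun B => iSup_le fun hB => iSup_le fun hxB => iSup_le fun hμB => ?_
  have hind : ∀ i, Measurable ((E i).indicator (1 : EuclideanSpace ℝ (Fin n) → ℝ≥0∞)) :=
    fun i => measurable_one.indicator (hE i)
  have hint : ∫⁻ y in B, ENNReal.ofReal |f y| ∂μ ≤ b * μ B + ∑' i, w i * μ (E i ∩ B) := by
    refine (lintegral_mono hf).trans_eq ?_
    rw [lintegral_add_left measurable_const, setLIntegral_const,
      lintegral_tsum fun i => ((hind i).const_mul (w i)).aemeasurable]
    congr 1
    refine tsum_congr fun i => ?_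
    rw [lintegral_const_mul _ (hind i), lintegral_indicator_one (hE i),
      Measure.restrict_apply (hE i)]
  calc (∫⁻ y in B, ENNReal.ofReal |f y| ∂μ) / μ B
      ≤ (b * μ B + ∑' i, w i * μ (E i ∩ B)) / μ B := by gcongr
    _ = b * (μ B / μ B) + ∑' i, w i * (μ (E i ∩ B) / μ B) := by
        simp only [div_eq_mul_inv, add_mul, ← ENNReal.tsum_mul_right, mul_assoc]
    _ ≤ b + ∑' i, w i * maxOp μ 𝔅 ((E i).indicator 1) x := by
        gcongr with i
        · exact mul_le_of_le_one_right' ENNReal.div_self_le_one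
        · exact measure_inter_div_le_maxOp_indicator (hE i) hB hμB hxB

theorem setOf_two_zpow_lt_maxOp_subset {f : EuclideanSpace ℝ (Fin n) → ℝ} (hf : Measurable f)
    (m : ℤ) :
    {x | 2 ^ (m + 1) < maxOp μ 𝔅 f x} ⊆
      ⋃ j : ℕ, halo μ 𝔅 (4⁻¹ ^ (j + 1)) {x | 2 ^ (m + j) < ENNReal.ofReal |f x|} := by
  intro x hx
  by_contra hnot
  simp only [halo, mem_iUnion, mem_ofPred_eq, not_exists, not_lt] at hnot
  refine lt_irrefl (maxOp μ 𝔅 f x) (lt_of_le_of_lt ?_ hx)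
  -- The levels `4⁻¹ ^ (j + 1)` beat the weights `2 ^ (m + j + 1)` of the layers of `f`, so these
  -- contribute no more than `2 ^ m` in total.
  have hcancel : ∀ j : ℕ, (2 : ℝ≥0∞) ^ (m + j + 1) * 4⁻¹ ^ (j + 1) = 2 ^ m * 2⁻¹ ^ (j + 1) := by
    intro j
    have h24 : (2 : ℝ≥0∞) * 4⁻¹ = 2⁻¹ := by
      rw [show (4 : ℝ≥0∞) = 2 * 2 by norm_num, ENNReal.mul_inv (by simp) (by simp), ← mul_assoc,
        ENNReal.mul_inv_cancel two_ne_zero (by simp), one_mul]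
    rw [add_assoc, ENNReal.zpow_add two_ne_zero (by simp), mul_assoc, ← h24, mul_pow]
    norm_cast
  calc maxOp μ 𝔅 f x
      ≤ 2 ^ m + ∑' j : ℕ, 2 ^ (m + j + 1) *
          maxOp μ 𝔅 ({x | 2 ^ (m + j) < ENNReal.ofReal |f x|}.indicator 1) x :=
        maxOp_le_add_tsum_maxOp_indicator
          (fun j => measurableSet_lt measurable_const hf.abs.ennreal_ofReal)
          (fun y => le_two_zpow_add_tsum_indicator ENNReal.ofReal_ne_top m) x
    _ ≤ 2 ^ m + ∑' j : ℕ, 2 ^ (m + j + 1) * 4⁻¹ ^ (j + 1) := by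
        gcongr with j
        exact hnot j
    _ = 2 ^ m + 2 ^ m := by
        simp only [hcancel, ENNReal.tsum_mul_left, ENNReal.tsum_geometric_add_one,
          ENNReal.one_sub_inv_two, inv_inv, ENNReal.inv_mul_cancel two_ne_zero ENNReal.ofNat_ne_top,
          mul_one]
    _ = 2 ^ (m + 1) := by
        rw [ENNReal.zpow_add two_ne_zero (by simp), zpow_one, mul_two]

theorem measure_two_zpow_lt_maxOp_le {C A : ℝ≥0∞}
    (hweak : ∀ E, MeasurableSet E → ∀ j : ℕ,
      μ (halo μ 𝔅 (4⁻¹ ^ (j + 1)) E) ≤ C * A ^ (j + 1) * μ E)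
    {f : EuclideanSpace ℝ (Fin n) → ℝ} (hf : Measurable f) (m : ℤ) :
    μ {x | 2 ^ (m + 1) < maxOp μ 𝔅 f x} ≤
      C * A * ∑' j : ℕ, A ^ j * μ {x | 2 ^ (m + j) < ENNReal.ofReal |f x|} := by
  have hmeas : ∀ j : ℕ, MeasurableSet {x | 2 ^ (m + j) < ENNReal.ofReal |f x|} := fun j =>
    measurableSet_lt measurable_const (hf.abs.ennreal_ofReal)
  calc μ {x | 2 ^ (m + 1) < maxOp μ 𝔅 f x}
      ≤ ∑' j : ℕ, μ (halo μ 𝔅 (4⁻¹ ^ (j + 1)) {x | 2 ^ (m + j) < ENNReal.ofReal |f x|}) :=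
        (measure_mono (setOf_two_zpow_lt_maxOp_subset hf m)).trans (measure_iUnion_le _)
    _ ≤ ∑' j : ℕ, C * A ^ (j + 1) * μ {x | 2 ^ (m + j) < ENNReal.ofReal |f x|} :=
        ENNReal.tsum_le_tsum fun j => hweak _ (hmeas j) j
    _ = C * A * ∑' j : ℕ, A ^ j * μ {x | 2 ^ (m + j) < ENNReal.ofReal |f x|} := by
        rw [← ENNReal.tsum_mul_left]
        exact tsum_congr fun j => by ring

theorem boundedOnLp_of_measure_halo_pow_le (h𝔅 : ∀ B ∈ 𝔅, IsOpen B) {C A : ℝ≥0∞} (hC : C ≠ ∞)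
    (hweak : ∀ E, MeasurableSet E → ∀ j : ℕ,
      μ (halo μ 𝔅 (4⁻¹ ^ (j + 1)) E) ≤ C * A ^ (j + 1) * μ E)
    {p : ℝ} (hp : 0 < p) (hA : A < 2 ^ p) : BoundedOnLp μ μ 𝔅 p := by
  set a : ℝ≥0∞ := 2 ^ p with ha_def
  have ha0 : a ≠ 0 := by simp [ha_def]
  have ha : a ≠ ∞ := by simp [ha_def]
  have hAa : 1 - A / a ≠ 0 := by
    rw [ne_eq, tsub_eq_zero_iff_le, not_le]
    exact ENNReal.div_lt_of_lt_mul (by rwa [one_mul])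
  have ha1 : 1 - a⁻¹ ≠ 0 := by
    rw [ne_eq, tsub_eq_zero_iff_le, not_le, ENNReal.inv_lt_one]
    exact ENNReal.one_lt_rpow ENNReal.one_lt_two hp
  refine ⟨C * A * a ^ 2 * (1 - A / a)⁻¹ * (1 - a⁻¹)⁻¹, by finiteness, fun f hf => ?_⟩
  set d : ℤ → ℝ≥0∞ := fun m => μ {x | 2 ^ m < ENNReal.ofReal |f x|}
  calc ∫⁻ x, maxOp μ 𝔅 f x ^ p ∂μ
      ≤ ∑' m : ℤ, a ^ (m + 1) * μ {x | 2 ^ m < maxOp μ 𝔅 f x} :=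
        lintegral_rpow_le_tsum_measure_lt (measurable_maxOp h𝔅 f) hp
    _ = ∑' m : ℤ, a ^ (m + 1 + 1) * μ {x | 2 ^ (m + 1) < maxOp μ 𝔅 f x} :=
        ((Equiv.addRight (1 : ℤ)).tsum_eq fun m =>
          a ^ (m + 1) * μ {x | 2 ^ m < maxOp μ 𝔅 f x}).symm
    _ ≤ ∑' m : ℤ, a ^ (m + 1 + 1) * (C * A * ∑' j : ℕ, A ^ j * d (m + j)) := by
        gcongr with m
        exact measure_two_zpow_lt_maxOp_le hweak hf m
    _ = C * A * a ^ 2 * ∑' m : ℤ, a ^ m * ∑' j : ℕ, A ^ j * d (m + j) := by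
        rw [← ENNReal.tsum_mul_left]
        refine tsum_congr fun m => ?_
        rw [ENNReal.zpow_add ha0 ha, ENNReal.zpow_add ha0 ha, zpow_one]
        ring
    _ = C * A * a ^ 2 * (1 - A / a)⁻¹ * ∑' k : ℤ, a ^ k * d k := by
        rw [tsum_zpow_mul_tsum_pow_mul ha0 ha, mul_assoc _ _ (∑' k : ℤ, a ^ k * d k)]
    _ ≤ C * A * a ^ 2 * (1 - A / a)⁻¹ *
          ((1 - a⁻¹)⁻¹ * ∫⁻ x, ENNReal.ofReal |f x| ^ p ∂μ) := by
        gcongr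
        exact tsum_measure_lt_le_lintegral_rpow hf.abs.ennreal_ofReal hp
    _ = _ := (mul_assoc _ _ _).symm

theorem exists_tauberianCond_of_boundedOnLp (h𝔅 : ∀ B ∈ 𝔅, IsOpen B) {p : ℝ} (hp : 0 < p)
    (hbdd : BoundedOnLp μ μ 𝔅 p) {γ : ℝ} (hγ : 0 < γ) :
    ∃ c : ℝ, 0 < c ∧ TauberianCond μ μ 𝔅 γ c := by
  obtain ⟨C, hC, hbdd⟩ := hbdd
  set ε : ℝ≥0∞ := ENNReal.ofReal γ ^ p
  have hε0 : ε ≠ 0 := (ENNReal.rpow_pos (ENNReal.ofReal_pos.2 hγ) ENNReal.ofReal_ne_top).ne'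
  have hε : ε ≠ ∞ := ENNReal.rpow_ne_top_of_nonneg hp.le ENNReal.ofReal_ne_top
  refine ⟨(C / ε).toReal + 1, by positivity, fun E hE => ?_⟩
  have hlp : ∫⁻ x, ENNReal.ofReal |E.indicator (1 : EuclideanSpace ℝ (Fin n) → ℝ) x| ^ p ∂μ
      = μ E := by
    rw [← lintegral_indicator_one hE]
    refine lintegral_congr fun x => ?_
    by_cases hx : x ∈ E <;> simp [hx, hp]
  calc μ {x | ENNReal.ofReal γ < maxOp μ 𝔅 (E.indicator 1) x}
      ≤ μ {x | ε ≤ maxOp μ 𝔅 (E.indicator 1) x ^ p} :=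
        measure_mono fun x hx => ENNReal.rpow_le_rpow (le_of_lt hx) hp.le
    _ ≤ (∫⁻ x, maxOp μ 𝔅 (E.indicator 1) x ^ p ∂μ) / ε :=
        meas_ge_le_lintegral_div ((measurable_maxOp h𝔅 _).pow_const p).aemeasurable hε0 hε
    _ ≤ C * μ E / ε := by
        gcongr
        exact (hbdd _ (measurable_one.indicator hE)).trans_eq (by rw [hlp])
    _ = C / ε * μ E := by rw [div_eq_mul_inv, div_eq_mul_inv, mul_right_comm]
    _ ≤ ENNReal.ofReal ((C / ε).toReal + 1) * μ E := by
        gcongr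
        exact (ENNReal.le_ofReal_iff_toReal_le (ENNReal.div_ne_top hC hε0) (by positivity)).2
          (le_add_of_nonneg_right zero_le_one)

end Interpolation

theorem exists_forall_lt_two_rpow {A : ℝ≥0∞} (hA : A ≠ ∞) :
    ∃ p₀ : ℝ, 1 < p₀ ∧ ∀ p : ℝ, p₀ < p → A < 2 ^ p := by
  obtain ⟨N, hN⟩ := ENNReal.exists_nat_gt hA
  refine ⟨N + 2, by linarith [N.cast_nonneg (α := ℝ)], fun p hp => ?_⟩
  calc A < N := hN
    _ ≤ 2 ^ N := mod_cast N.lt_two_pow_self.le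
    _ = 2 ^ (N : ℝ) := (ENNReal.rpow_natCast 2 N).symm
    _ ≤ 2 ^ p := ENNReal.rpow_le_rpow_of_exponent_le one_le_two (by linarith)

theorem statement6_general (n : ℕ) (𝔊 : Set (Set (EuclideanSpace ℝ (Fin n))))
    (hG : ∀ R ∈ 𝔊, IsSymmConvexBody R) (hhom : HomothecyInvariant 𝔊)
    (μ : Measure (EuclideanSpace ℝ (Fin n))) [IsLocallyFiniteMeasure μ]
    (hdbl : ∃ Δ : ℝ, DoublingWrt μ 𝔊 Δ) :
    (∃ γ ∈ Ioo (0 : ℝ) 1, ∃ c : ℝ, 0 < c ∧ TauberianCond μ μ 𝔊 γ c)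
    ↔ (∃ p₀ : ℝ, 1 < p₀ ∧ ∀ p : ℝ, p₀ < p → BoundedOnLp μ μ 𝔊 p) := by
  have hopen : ∀ R ∈ 𝔊, IsOpen R := fun R hR => (hG R hR).1.2.2.1
  constructor
  · rintro ⟨γ, hγ, c, -, hT⟩
    obtain ⟨Δ, hΔ⟩ := hdbl
    obtain ⟨g, hγg, hg⟩ := exists_between (ENNReal.ofReal_lt_one.2 hγ.2)
    obtain ⟨K, hK⟩ := exists_measure_halo_pow_le hopen (fun R hR => (hG R hR).measure_ne_top)
      hγg.le (δ := ((Δ.toNNReal : ℝ≥0∞) ^ 3)⁻¹ * (1 - g))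
      (mul_ne_zero (by simp) (tsub_pos_of_lt hg).ne')
      (fun A hA R hR => mul_measure_inter_le_measure_halo_inter hG hhom hΔ hγg hg hA hR) hT
    obtain ⟨p₀, hp₀, hA⟩ := exists_forall_lt_two_rpow (ENNReal.pow_ne_top ENNReal.ofReal_ne_top)
    exact ⟨p₀, hp₀, fun p hp => boundedOnLp_of_measure_halo_pow_le hopen ENNReal.ofReal_ne_top hK
      (by linarith) (hA p hp)⟩
  · rintro ⟨p₀, hp₀, hbdd⟩
    exact ⟨1 / 2, by norm_num, exists_tauberianCond_of_boundedOnLp hopen (by linarith)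
      (hbdd (p₀ + 1) (by linarith)) (by norm_num)⟩

/-- For a homothecy invariant collection `𝔊` of open rectangles and a
nonzero locally finite Borel measure `μ` doubling w.r.t. `𝔊`: the Tauberian condition at
some fixed level `γ ∈ (0,1)` for `M_{𝔊,μ}` w.r.t. `μ` itself holds iff there is `p₀ > 1`
such that `M_{𝔊,μ}` is bounded on `L^p(μ)` for all `p > p₀`. -/
theorem statement6 (n : ℕ) (𝔊 : Set (Set (EuclideanSpace ℝ (Fin n))))
    (hG : ∀ R ∈ 𝔊, IsRect R) (hhom : HomothecyInvariant 𝔊)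
    (μ : Measure (EuclideanSpace ℝ (Fin n)))
    (hloc : IsLocallyFiniteMeasure μ) (hμ : μ ≠ 0)
    (hdbl : ∃ Δ : ℝ, 1 < Δ ∧ DoublingWrt μ 𝔊 Δ) :
    (∃ γ ∈ Set.Ioo (0 : ℝ) 1, ∃ c : ℝ, 0 < c ∧ TauberianCond μ μ 𝔊 γ c)
    ↔ (∃ p₀ : ℝ, 1 < p₀ ∧ ∀ p : ℝ, p₀ < p → BoundedOnLp μ μ 𝔊 p) := by
  obtain ⟨Δ, -, hΔ⟩ := hdbl
  exact statement6_general n 𝔊 (fun R hR => (hG R hR).isSymmConvexBody) hhom μ ⟨Δ, hΔ⟩
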